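/- Let α, β : V → ℝ be real-linear functionals, let Λ := α + iβ, and let 0 ≤ κ < 1. If Λ is κ-quasi-holomorphic, i.e. |Λ^{(0,1)}| ≤ κ·|Λ^{(1,0)}|, then: (i) α = 0 if and only if β = 0; and (ii) if α ≠ 0 then α and β are linearly independent over ℝ (equivalently, the real-linear map Λ : V → ℂ is surjective). (Pointwise linear-algebra content of the paper's lemma on quasi-holomorphic sections: at a point where the section does not vanish, its covariant derivative either vanishes or is surjective, and the two 1-form components vanish simultaneously.) -/

import Mathlib

/-!
If `α` and `β` satisfy a nontrivial relation `a α + b β = 0`, then `Λ = α + iβ` takes values in a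
real line `ℝ c ⊂ ℂ`, so `Λ = c γ` with `γ` a real functional. Then
`|Λ⁰¹ v| = |c| |γ v + i γ (J v)| / 2 = |c| |γ v - i γ (J v)| / 2 = |Λ¹⁰ v|` for every `v`, because the
two middle numbers are conjugate. Hence `‖Λ⁰¹‖ = ‖Λ¹⁰‖`, and `‖Λ⁰¹‖ ≤ κ ‖Λ¹⁰‖` with `κ < 1` forces
both parts, and so `Λ = Λ⁰¹ + Λ¹⁰`, to vanish (`eq_zero_of_real_relation`). All the claims follow
by choosing suitable relations.
-/

/-- A nontrivial real relation between `α` and `β` makes the `(0,1)` and `(1,0)` parts of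
`α + iβ` equal in norm, so quasi-holomorphy with `κ < 1` kills both functionals. -/
theorem eq_zero_of_real_relation
    {V : Type*} [NormedAddCommGroup V] [InnerProductSpace ℝ V]
    (J : V →ₗᵢ[ℝ] V) (α β : V →L[ℝ] ℝ) (κ : ℝ) (hκ1 : κ < 1)
    (Λ Λ01 Λ10 : V →L[ℝ] ℂ)
    (hΛ : ∀ v, Λ v = (α v : ℂ) + Complex.I * (β v : ℂ))
    (hΛ01 : ∀ v, Λ01 v = (1/2 : ℂ) * (Λ v + Complex.I * Λ (J v)))
    (hΛ10 : ∀ v, Λ10 v = (1/2 : ℂ) * (Λ v - Complex.I * Λ (J v)))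
    (hqh : ‖Λ01‖ ≤ κ * ‖Λ10‖)
    (a b : ℝ) (hab : a ≠ 0 ∨ b ≠ 0) (h : ∀ v, a * α v + b * β v = 0) :
    α = 0 ∧ β = 0 := by
  have hdet : ∀ v w, α v * β w = β v * α w := by
    intro v w
    have h1 := h v
    have h2 := h w
    rcases hab with ha | hb
    · apply mul_left_cancel₀ ha
      linear_combination β w * h1 - β v * h2
    · apply mul_left_cancel₀ hb
      linear_combination α v * h2 - α w * h1
  have hpt : ∀ v, ‖Λ01 v‖ = ‖Λ10 v‖ := by
    intro v
    rw [hΛ01, hΛ10, norm_mul, norm_mul]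
    congr 1
    rw [← sq_eq_sq₀ (norm_nonneg _) (norm_nonneg _), Complex.sq_norm, Complex.sq_norm,
      hΛ, hΛ, Complex.normSq_apply, Complex.normSq_apply]
    simp
    linear_combination -4 * hdet v (J v)
  have hle : ‖Λ10‖ ≤ ‖Λ01‖ :=
    Λ10.opNorm_le_bound (norm_nonneg _) fun v => by
      rw [← hpt]
      exact Λ01.le_opNorm v
  have h10 : ‖Λ10‖ = 0 := by
    have := norm_nonneg Λ10
    nlinarith
  have hz : ∀ v, Λ v = 0 := by
    intro v
    have e10 : Λ10 v = 0 := by rw [norm_eq_zero.mp h10]; rfl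
    have e01 : Λ01 v = 0 := by rw [← norm_eq_zero, hpt, e10, norm_zero]
    have s1 := hΛ01 v
    have s2 := hΛ10 v
    rw [e01] at s1
    rw [e10] at s2
    linear_combination -s1 - s2
  constructor
  · ext v
    simpa [hΛ] using congrArg Complex.re (hz v)
  · ext v
    simpa [hΛ] using congrArg Complex.im (hz v)

/-- Let `V` be a finite-dimensional real inner product space with a
compatible complex structure `J`, let `α β : V → ℝ` be continuous real-linear
functionals, `Λ := α + iβ`, and `0 ≤ κ < 1`.  If `Λ` is κ-quasi-holomorphic
(`‖Λ⁰¹‖ ≤ κ·‖Λ¹⁰‖`), then: (i) `α = 0 ↔ β = 0`; and (ii) if `α ≠ 0` then `α` and `β`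
are linearly independent over `ℝ` — equivalently, `Λ : V → ℂ` is surjective. -/
theorem quasi_holomorphic_vanish_or_surjective
    {V : Type*} [NormedAddCommGroup V] [InnerProductSpace ℝ V] [FiniteDimensional ℝ V]
    (J : V →ₗᵢ[ℝ] V) (hJ : ∀ v, J (J v) = -v)
    (α β : V →L[ℝ] ℝ) (κ : ℝ) (hκ0 : 0 ≤ κ) (hκ1 : κ < 1)
    (Λ Λ01 Λ10 : V →L[ℝ] ℂ)
    (hΛ : ∀ v, Λ v = (α v : ℂ) + Complex.I * (β v : ℂ))
    (hΛ01 : ∀ v, Λ01 v = (1/2 : ℂ) * (Λ v + Complex.I * Λ (J v)))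
    (hΛ10 : ∀ v, Λ10 v = (1/2 : ℂ) * (Λ v - Complex.I * Λ (J v)))
    (hqh : ‖Λ01‖ ≤ κ * ‖Λ10‖) :
    (α = 0 ↔ β = 0) ∧
    (α ≠ 0 → LinearIndependent ℝ ![α, β] ∧ Function.Surjective Λ) := by
  have key := eq_zero_of_real_relation J α β κ hκ1 Λ Λ01 Λ10 hΛ hΛ01 hΛ10 hqh
  refine ⟨⟨fun h => ?_, fun h => ?_⟩, fun hα => ⟨?_, ?_⟩⟩
  · exact (key 1 0 (by simp) (by simp [h])).2
  · exact (key 0 1 (by simp) (by simp [h])).1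
  · rw [LinearIndependent.pair_iff]
    intro s t hst
    by_contra hne
    refine hα (key s t (by tauto) fun v => ?_).1
    simpa using congrArg (fun f : V →L[ℝ] ℝ => f v) hst
  · obtain ⟨v, hv⟩ : ∃ v, α v ≠ 0 := by
      by_contra! hc
      exact hα (by ext v; simpa using hc v)
    obtain ⟨w, hw⟩ : ∃ w, β v * α w - α v * β w ≠ 0 := by
      by_contra! hc
      exact hα (key (β v) (-α v) (Or.inr (neg_ne_zero.mpr hv))
        fun w => by linear_combination hc w).1
    obtain ⟨d, hd⟩ : ∃ d, d = β v * α w - α v * β w := ⟨_, rfl⟩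
    rw [← hd] at hw
    intro z
    -- The coefficients are Cramer's solution of `α (x v + y w) = re z`, `β (x v + y w) = im z`.
    set u := ((α w * z.im - β w * z.re) / d) • v
      + ((β v * z.re - α v * z.im) / d) • w with hu
    have hαu : α u = z.re := by
      simp only [hu, map_add, map_smul, smul_eq_mul]
      field_simp
      linear_combination -z.re * hd
    have hβu : β u = z.im := by
      simp only [hu, map_add, map_smul, smul_eq_mul]
      field_simp
      linear_combination -z.im * hd
    refine ⟨u, ?_⟩
    rw [hΛ, hαu, hβu, mul_comm, Complex.re_add_im]
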